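/- Let ρ be a C_0^∞ function supported in (-π,π) with ρ(0)=1, and let ψ_{p,θ}(x) = (1/θ)ρ(x/θ)D_p(x/θ) be the associated two-parameter spectral mollifier. Then for every integer s ≥ 0 there exists a constant C_s (of the form C_s = Const·‖(θy)^s ρ(y)‖_{C^s}) such that the s-th moment of ψ_{p,θ} satisfies ∫_{-πθ}^{πθ} y^s ψ_{p,θ}(y) dy = δ_{s0} + O(C_s · p^{-(s-1)}), i.e. the mass is 1 up to O(p^{-(s-1)}) for s=0 and all higher moments are of size O(p^{-(s-1)}). -/

import Mathlib

open MeasureTheory Real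

noncomputable section

/-- Dirichlet kernel of degree `p`: `D_p(x) = (1/2π) ∑_{|k| ≤ p} e^{ikx}`. -/
def dirichletKer (p : ℕ) (x : ℝ) : ℝ :=
  (1 / (2 * π)) * ∑ k ∈ Finset.Icc (-(p : ℤ)) (p : ℤ), Real.cos (k * x)

/-- Fourier coefficient `f̂_k` of a 2π-periodic function. -/
def fourierCoefOn (f : ℝ → ℂ) (k : ℤ) : ℂ :=
  (1 / (2 * π)) * ∫ y in (-π)..π, f y * Complex.exp (-(Complex.I * k * y))

/-- `N`-th Fourier partial sum `S_N f`. -/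
def SN (N : ℕ) (f : ℝ → ℂ) (x : ℝ) : ℂ :=
  ∑ k ∈ Finset.Icc (-(N : ℤ)) (N : ℤ), fourierCoefOn f k * Complex.exp (Complex.I * k * x)

/-- The two-parameter spectral mollifier `ψ_{p,θ}(x) = (1/θ) ρ(x/θ) D_p(x/θ)`. -/
def specMollifier (ρ : ℝ → ℝ) (p : ℕ) (θ : ℝ) (x : ℝ) : ℝ :=
  (1 / θ) * ρ (x / θ) * dirichletKer p (x / θ)

/-- `‖g‖_{C^s}`: the sup norm of the `s`-th derivative of `g`. -/
def CsNorm (s : ℕ) (g : ℝ → ℝ) : ℝ := ⨆ x : ℝ, |iteratedDeriv s g x|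

/-! Put `g(y) = (θy)^s ρ(y)`. Rescaling by `θ` turns the moment into `∫ g D_p`, which is the
Fourier partial sum `S_p g(0)`, while `g(0) = δ_{s0} ρ(0)`; the claim is thus an estimate of the
pointwise error of a Fourier partial sum. Integrating by parts `s` times gives
`|ĝ(k)| = |k|^{-s} |(g^{(s)})^(k)|`, and for `s ≥ 1` Cauchy–Schwarz and Parseval bound the tail by
`∑_{|k|>p} |ĝ(k)| ≤ (∑_{|k|>p} |k|^{-2s})^{1/2} ‖g‖_{C^s} ≤ 2 p^{1/2-s} ‖g‖_{C^s}`.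
For `s = 0` the Fourier series need not converge, but Cauchy–Schwarz on the `2p+1` terms of
`S_p g(0)` itself bounds them by `√(2p+1) ‖g‖_{C^0}`, which is again of order `p^{1/2-s}`.
-/

section FourierCoeffOn

variable {a b : ℝ} {f : ℝ → ℂ} {s : ℕ} {M : ℝ}

lemma hasSum_fourierCoeffOn_mul_fourier (hab : a < b) (hf : ContinuousOn f (Set.Icc a b))
    (hper : f a = f b) (hsum : Summable (fourierCoeffOn hab f)) {x : ℝ} (hx : x ∈ Set.Icc a b) :
    HasSum (fun k ↦ fourierCoeffOn hab f k * fourier k (x : AddCircle (b - a))) (f x) := by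
  have : Fact (0 < b - a) := ⟨sub_pos.2 hab⟩
  have hend : a + (b - a) = b := add_sub_cancel a b
  have hper' : f a = f (a + (b - a)) := by rwa [hend]
  let F : C(AddCircle (b - a), ℂ) :=
    ⟨AddCircle.liftIoc (b - a) a f, AddCircle.liftIoc_continuous hper' (by rwa [hend])⟩
  suffices hFx : F x = f x from
    hFx ▸ has_pointwise_sum_fourier_series_of_summable (f := F) hsum x
  rcases hx.1.eq_or_lt with rfl | hax
  · change AddCircle.liftIoc (b - a) a f a = f a
    rw [AddCircle.liftIoc_eq_liftIco hper']
    exact AddCircle.liftIco_coe_apply (by simpa using hab)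
  · exact AddCircle.liftIoc_coe_apply ⟨hax, hend.symm ▸ hx.2⟩

lemma fourierCoeffOn_eq_pow_mul_fourierCoeffOn_iteratedDeriv (hab : a < b) (hf : ContDiff ℝ s f)
    (hper : ∀ j < s, iteratedDeriv j f a = iteratedDeriv j f b) {k : ℤ} (hk : k ≠ 0) :
    fourierCoeffOn hab f k =
      ((b - a) / (2 * π * Complex.I * k)) ^ s * fourierCoeffOn hab (iteratedDeriv s f) k := by
  induction s with
  | zero => simp
  | succ s ih =>
    have hderiv : ∀ x, HasDerivAt (iteratedDeriv s f) (iteratedDeriv (s + 1) f x) x := fun x ↦ by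
      rw [iteratedDeriv_succ]
      exact (hf.differentiable_iteratedDeriv s (mod_cast s.lt_succ_self) x).hasDerivAt
    have hparts := fourierCoeffOn_of_hasDerivAt hab hk (fun x _ ↦ hderiv x)
      ((hf.continuous_iteratedDeriv _ le_rfl).intervalIntegrable a b)
    rw [hper s s.lt_succ_self, sub_self, mul_zero, zero_sub] at hparts
    rw [ih (hf.of_le (mod_cast s.le_succ)) fun j hj ↦ hper j (hj.trans s.lt_succ_self), hparts]
    have hk' : (k : ℂ) ≠ 0 := mod_cast hk
    have hπ : (π : ℂ) ≠ 0 := mod_cast pi_ne_zero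
    rw [pow_succ]
    field_simp

lemma sum_sq_norm_fourierCoeffOn_le (hab : a < b)
    (hf : AEStronglyMeasurable f (volume.restrict (Set.Ioc a b)))
    (hM : ∀ x ∈ Set.Ioc a b, ‖f x‖ ≤ M) (T : Finset ℤ) :
    ∑ k ∈ T, ‖fourierCoeffOn hab f k‖ ^ 2 ≤ M ^ 2 := by
  have hbound : ∀ᵐ x ∂volume.restrict (Set.Ioc a b), ‖f x‖ ≤ M :=
    ae_restrict_of_forall_mem measurableSet_Ioc hM
  have hlen : 0 < b - a := sub_pos.2 hab
  calc ∑ k ∈ T, ‖fourierCoeffOn hab f k‖ ^ 2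
      ≤ (b - a)⁻¹ • ∫ x in a..b, ‖f x‖ ^ 2 :=
        sum_le_hasSum T (fun _ _ ↦ sq_nonneg _)
          (hasSum_sq_fourierCoeffOn hab (MemLp.of_bound hf M hbound))
    _ ≤ (b - a)⁻¹ • (M ^ 2 * |b - a|) := by
        gcongr
        refine (Real.le_norm_self _).trans
          (intervalIntegral.norm_integral_le_of_norm_le_const fun x hx ↦ ?_)
        rw [norm_pow, norm_norm]
        gcongr
        exact hM x (Set.uIoc_of_le hab.le ▸ hx)
    _ = M ^ 2 := by
        rw [abs_of_pos hlen, smul_eq_mul]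
        field_simp

end FourierCoeffOn

lemma sum_inv_sq_le_two_div {p : ℕ} (hp : p ≠ 0) {T : Finset ℤ} (hT : ∀ k ∈ T, p < k.natAbs) :
    ∑ k ∈ T, ((k : ℝ) ^ 2)⁻¹ ≤ 2 / p := by
  have hfiber (n : ℕ) : (T.filter fun k ↦ k.natAbs = n).card ≤ 2 :=
    (Finset.card_le_card fun k hk ↦ by
      simpa [Int.natAbs_eq_iff] using (Finset.mem_filter.1 hk).2).trans
      (Finset.card_le_two (a := (n : ℤ)) (b := -n))
  obtain ⟨N, hpN, himage⟩ : ∃ N, p ≤ N ∧ T.image Int.natAbs ⊆ Finset.Ioc p N := by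
    refine ⟨max p (T.sup Int.natAbs), le_max_left _ _, Finset.image_subset_iff.2 fun k hk ↦ ?_⟩
    exact Finset.mem_Ioc.2 ⟨hT k hk, le_max_of_le_right (Finset.le_sup hk)⟩
  calc ∑ k ∈ T, ((k : ℝ) ^ 2)⁻¹
      = ∑ n ∈ T.image Int.natAbs, (T.filter fun k ↦ k.natAbs = n).card • ((n : ℝ) ^ 2)⁻¹ := by
        rw [← Finset.sum_comp (fun n : ℕ ↦ ((n : ℝ) ^ 2)⁻¹)]
        simp [Nat.cast_natAbs]
    _ ≤ ∑ n ∈ T.image Int.natAbs, 2 * ((n : ℝ) ^ 2)⁻¹ := by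
        gcongr with n
        rw [nsmul_eq_mul]
        gcongr
        exact mod_cast hfiber n
    _ ≤ 2 * ∑ n ∈ Finset.Ioc p N, ((n : ℝ) ^ 2)⁻¹ := by
        rw [← Finset.mul_sum]
        gcongr
    _ ≤ 2 * (p : ℝ)⁻¹ := by
        gcongr
        refine (sum_Ioc_inv_sq_le_sub hp hpN).trans (sub_le_self _ ?_)
        positivity
    _ = 2 / p := (div_eq_mul_inv _ _).symm

lemma rpow_half_sub_natCast_sq {x : ℝ} (hx : 0 < x) (n : ℕ) :
    (x ^ ((1 / 2 : ℝ) - n)) ^ 2 = x / (x ^ n) ^ 2 := by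
  rw [Real.rpow_sub hx, ← Real.sqrt_eq_rpow, Real.rpow_natCast, div_pow, Real.sq_sqrt hx.le]

lemma sum_inv_abs_pow_sq_le {p s : ℕ} (hs : s ≠ 0) (hp : p ≠ 0) {T : Finset ℤ}
    (hT : ∀ k ∈ T, p < k.natAbs) :
    ∑ k ∈ T, (|(k : ℝ)| ^ s)⁻¹ ^ 2 ≤ 2 * ((p : ℝ) ^ ((1 / 2 : ℝ) - s)) ^ 2 := by
  have hp0 : (0 : ℝ) < p := mod_cast Nat.pos_of_ne_zero hp
  obtain ⟨n, rfl⟩ := Nat.exists_eq_succ_of_ne_zero hs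
  calc ∑ k ∈ T, (|(k : ℝ)| ^ (n + 1))⁻¹ ^ 2
      ≤ ∑ k ∈ T, ((p : ℝ) ^ n)⁻¹ ^ 2 * ((k : ℝ) ^ 2)⁻¹ := by
        refine Finset.sum_le_sum fun k hk ↦ ?_
        have hpk : (p : ℝ) ≤ |(k : ℝ)| := by
          rw [← Int.cast_abs, ← Nat.cast_natAbs]
          exact mod_cast (hT k hk).le
        rw [pow_succ |(k : ℝ)|, mul_inv, mul_pow, inv_pow |(k : ℝ)|, sq_abs]
        gcongr
    _ ≤ ((p : ℝ) ^ n)⁻¹ ^ 2 * (2 / p) := by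
        rw [← Finset.mul_sum]
        gcongr
        exact sum_inv_sq_le_two_div hp hT
    _ = 2 * ((p : ℝ) ^ ((1 / 2 : ℝ) - (n + 1 : ℕ))) ^ 2 := by
        rw [rpow_half_sub_natCast_sq hp0]
        field_simp
        ring

lemma norm_sub_sum_le_of_hasSum {ι E : Type*} [SeminormedAddCommGroup E] {u : ι → E} {x : E}
    (hu : HasSum u x) (S : Finset ι) {B : ℝ}
    (hB : ∀ T : Finset ι, Disjoint T S → ∑ i ∈ T, ‖u i‖ ≤ B) : ‖x - ∑ i ∈ S, u i‖ ≤ B := by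
  classical
  refine le_of_tendsto (Filter.Tendsto.norm (Filter.Tendsto.sub_const hu _)) ?_
  filter_upwards [Filter.eventually_ge_atTop S] with T hST
  rw [← Finset.sum_sdiff hST, add_sub_cancel_right]
  exact (norm_sum_le _ _).trans (hB _ Finset.sdiff_disjoint)

section SymmetricInterval

variable {f : ℝ → ℂ} {s p : ℕ} {M : ℝ}

lemma fourier_coe_eq_exp (k : ℤ) (x : ℝ) :
    fourier k (x : AddCircle (π - -π)) = Complex.exp (Complex.I * k * x) := by
  rw [fourier_coe_apply]
  have hπ : (π : ℂ) ≠ 0 := mod_cast pi_ne_zero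
  congr 1
  push_cast
  field_simp
  ring

lemma fourierCoefOn_eq_fourierCoeffOn (f : ℝ → ℂ) :
    fourierCoefOn f = fourierCoeffOn (neg_lt_self pi_pos) f := by
  ext k
  rw [fourierCoefOn, fourierCoeffOn_eq_integral, Complex.real_smul]
  congr 1
  · push_cast
    ring
  · refine intervalIntegral.integral_congr fun y _ ↦ ?_
    simp only [fourier_coe_eq_exp, smul_eq_mul]
    rw [mul_comm]
    push_cast
    ring_nf

lemma sum_sq_norm_fourierCoefOn_le (hf : Continuous f)
    (hM : ∀ y ∈ Set.Icc (-π) π, ‖f y‖ ≤ M) (T : Finset ℤ) :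
    ∑ k ∈ T, ‖fourierCoefOn f k‖ ^ 2 ≤ M ^ 2 := by
  simp only [fourierCoefOn_eq_fourierCoeffOn]
  exact sum_sq_norm_fourierCoeffOn_le _ hf.aestronglyMeasurable
    (fun x hx ↦ hM x (Set.Ioc_subset_Icc_self hx)) T

lemma sum_norm_fourierCoefOn_le_sqrt (hf : Continuous f)
    (hM : ∀ y ∈ Set.Icc (-π) π, ‖f y‖ ≤ M) (T : Finset ℤ) :
    ∑ k ∈ T, ‖fourierCoefOn f k‖ ≤ √T.card * M := by
  have hM0 : 0 ≤ M := (norm_nonneg _).trans (hM 0 (by simp [pi_pos.le]))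
  refine le_of_sq_le_sq ?_ (by positivity)
  calc (∑ k ∈ T, ‖fourierCoefOn f k‖) ^ 2
      ≤ T.card * ∑ k ∈ T, ‖fourierCoefOn f k‖ ^ 2 := sq_sum_le_card_mul_sum_sq
    _ ≤ T.card * M ^ 2 := by
        gcongr
        exact sum_sq_norm_fourierCoefOn_le hf hM T
    _ = (√T.card * M) ^ 2 := by rw [mul_pow, Real.sq_sqrt (Nat.cast_nonneg _)]

lemma norm_fourierCoefOn_eq_inv_pow_mul (hf : ContDiff ℝ s f)
    (hper : ∀ j < s, iteratedDeriv j f (-π) = iteratedDeriv j f π) {k : ℤ} (hk : k ≠ 0) :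
    ‖fourierCoefOn f k‖ = (|(k : ℝ)| ^ s)⁻¹ * ‖fourierCoefOn (iteratedDeriv s f) k‖ := by
  have hπ : (π : ℂ) ≠ 0 := mod_cast pi_ne_zero
  have hk' : (k : ℂ) ≠ 0 := mod_cast hk
  have hfactor : ((π : ℝ) - (-π : ℝ) : ℂ) / (2 * π * Complex.I * k) = (Complex.I * k)⁻¹ := by
    push_cast
    field_simp
    ring
  simp only [fourierCoefOn_eq_fourierCoeffOn]
  rw [fourierCoeffOn_eq_pow_mul_fourierCoeffOn_iteratedDeriv _ hf hper hk, hfactor]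
  simp

lemma sum_norm_fourierCoefOn_le_of_lt_natAbs (hs : s ≠ 0) (hp : p ≠ 0) (hf : ContDiff ℝ s f)
    (hper : ∀ j < s, iteratedDeriv j f (-π) = iteratedDeriv j f π)
    (hM : ∀ y ∈ Set.Icc (-π) π, ‖iteratedDeriv s f y‖ ≤ M) {T : Finset ℤ}
    (hT : ∀ k ∈ T, p < k.natAbs) :
    ∑ k ∈ T, ‖fourierCoefOn f k‖ ≤ 2 * M * (p : ℝ) ^ ((1 / 2 : ℝ) - s) := by
  have hM0 : 0 ≤ M := (norm_nonneg _).trans (hM 0 (by simp [pi_pos.le]))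
  have hk0 : ∀ k ∈ T, k ≠ 0 := fun k hk ↦ Int.natAbs_pos.1 ((Nat.zero_le p).trans_lt (hT k hk))
  refine le_of_sq_le_sq ?_ (by positivity)
  calc (∑ k ∈ T, ‖fourierCoefOn f k‖) ^ 2
      = (∑ k ∈ T, (|(k : ℝ)| ^ s)⁻¹ * ‖fourierCoefOn (iteratedDeriv s f) k‖) ^ 2 := by
        rw [Finset.sum_congr rfl fun k hk ↦ norm_fourierCoefOn_eq_inv_pow_mul hf hper (hk0 k hk)]
    _ ≤ (∑ k ∈ T, (|(k : ℝ)| ^ s)⁻¹ ^ 2) * ∑ k ∈ T, ‖fourierCoefOn (iteratedDeriv s f) k‖ ^ 2 :=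
        Finset.sum_mul_sq_le_sq_mul_sq _ _ _
    _ ≤ (2 * ((p : ℝ) ^ ((1 / 2 : ℝ) - s)) ^ 2) * M ^ 2 := by
        gcongr
        · exact sum_inv_abs_pow_sq_le hs hp hT
        · exact sum_sq_norm_fourierCoefOn_le (hf.continuous_iteratedDeriv s le_rfl) hM T
    _ ≤ (2 * M * (p : ℝ) ^ ((1 / 2 : ℝ) - s)) ^ 2 := by
        rw [mul_pow, mul_pow, mul_right_comm]
        gcongr
        norm_num

lemma summable_fourierCoefOn (hs : s ≠ 0) (hf : ContDiff ℝ s f)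
    (hper : ∀ j < s, iteratedDeriv j f (-π) = iteratedDeriv j f π) :
    Summable (fourierCoefOn f) := by
  obtain ⟨M, hM⟩ := isCompact_Icc.exists_bound_of_continuousOn
    (hf.continuous_iteratedDeriv s le_rfl).continuousOn
  refine .of_norm (summable_of_sum_le (c := ∑ k ∈ Finset.Icc (-1) 1, ‖fourierCoefOn f k‖ +
    2 * M * ((1 : ℕ) : ℝ) ^ ((1 / 2 : ℝ) - s)) (fun _ ↦ norm_nonneg _) fun T ↦ ?_)
  rw [← Finset.sum_inter_add_sum_sdiff T (Finset.Icc (-1) 1)]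
  gcongr
  · exact Finset.inter_subset_right
  · refine sum_norm_fourierCoefOn_le_of_lt_natAbs hs one_ne_zero hf hper hM fun k hk ↦ ?_
    have := (Finset.mem_sdiff.1 hk).2
    rw [Finset.mem_Icc] at this
    omega

lemma norm_fourierCoefOn_mul_exp (k : ℤ) (x : ℝ) :
    ‖fourierCoefOn f k * Complex.exp (Complex.I * k * x)‖ = ‖fourierCoefOn f k‖ := by
  rw [← fourier_coe_eq_exp, norm_mul, fourier_apply, Circle.norm_coe, mul_one]

lemma norm_sub_SN_le_of_continuous (hp : p ≠ 0) (hf : Continuous f)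
    (hM : ∀ y ∈ Set.Icc (-π) π, ‖f y‖ ≤ M) {x : ℝ} (hx : x ∈ Set.Icc (-π) π) :
    ‖f x - SN p f x‖ ≤ 3 * M * √p := by
  have hM0 : 0 ≤ M := (norm_nonneg _).trans (hM x hx)
  have hp1 : (1 : ℝ) ≤ p := mod_cast Nat.one_le_iff_ne_zero.2 hp
  have hcard : (Finset.Icc (-(p : ℤ)) p).card = 2 * p + 1 := by
    rw [Int.card_Icc]
    omega
  calc ‖f x - SN p f x‖
      ≤ ‖f x‖ + ∑ k ∈ Finset.Icc (-(p : ℤ)) p, ‖fourierCoefOn f k‖ := by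
        refine (norm_sub_le _ _).trans ?_
        gcongr
        rw [SN]
        exact norm_sum_le_of_le _ fun k _ ↦ (norm_fourierCoefOn_mul_exp k x).le
    _ ≤ M + √(2 * p + 1 : ℕ) * M := by
        gcongr
        · exact hM x hx
        · exact hcard ▸ sum_norm_fourierCoefOn_le_sqrt hf hM _
    _ ≤ √p * M + (2 * √p) * M := by
        gcongr
        · exact le_mul_of_one_le_left hM0 (Real.one_le_sqrt.2 hp1)
        · rw [Real.sqrt_le_left (by positivity), mul_pow, Real.sq_sqrt (by positivity)]
          push_cast
          linarith
    _ = 3 * M * √p := by ring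

lemma norm_sub_SN_le_of_contDiff (hs : s ≠ 0) (hp : p ≠ 0) (hf : ContDiff ℝ s f)
    (hper : ∀ j < s, iteratedDeriv j f (-π) = iteratedDeriv j f π)
    (hM : ∀ y ∈ Set.Icc (-π) π, ‖iteratedDeriv s f y‖ ≤ M) {x : ℝ} (hx : x ∈ Set.Icc (-π) π) :
    ‖f x - SN p f x‖ ≤ 2 * M * (p : ℝ) ^ ((1 / 2 : ℝ) - s) := by
  have hseries :
      HasSum (fun k : ℤ ↦ fourierCoefOn f k * Complex.exp (Complex.I * k * x)) (f x) := by
    simp only [fourierCoefOn_eq_fourierCoeffOn, ← fourier_coe_eq_exp]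
    refine hasSum_fourierCoeffOn_mul_fourier _ hf.continuous.continuousOn ?_ ?_ hx
    · simpa using hper 0 (Nat.pos_of_ne_zero hs)
    · exact fourierCoefOn_eq_fourierCoeffOn f ▸ summable_fourierCoefOn hs hf hper
  refine norm_sub_sum_le_of_hasSum hseries _ fun T hT ↦ ?_
  simp only [norm_fourierCoefOn_mul_exp]
  refine sum_norm_fourierCoefOn_le_of_lt_natAbs hs hp hf hper hM fun k hk ↦ ?_
  have := Finset.disjoint_left.1 hT hk
  rw [Finset.mem_Icc] at this
  omega

theorem norm_sub_SN_le (hp : p ≠ 0) (hf : ContDiff ℝ s f)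
    (hper : ∀ j < s, iteratedDeriv j f (-π) = iteratedDeriv j f π)
    (hM : ∀ y ∈ Set.Icc (-π) π, ‖iteratedDeriv s f y‖ ≤ M) {x : ℝ} (hx : x ∈ Set.Icc (-π) π) :
    ‖f x - SN p f x‖ ≤ 3 * M * (p : ℝ) ^ ((1 / 2 : ℝ) - s) := by
  rcases eq_or_ne s 0 with rfl | hs
  · simpa [Real.sqrt_eq_rpow] using
      norm_sub_SN_le_of_continuous hp hf.continuous (by simpa using hM) hx
  · have hM0 : 0 ≤ M := (norm_nonneg _).trans (hM x hx)
    refine (norm_sub_SN_le_of_contDiff hs hp hf hper hM hx).trans ?_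
    gcongr
    norm_num

end SymmetricInterval

section DirichletKernel

lemma dirichletKer_neg (p : ℕ) (x : ℝ) : dirichletKer p (-x) = dirichletKer p x := by
  simp [dirichletKer]

lemma sum_exp_eq_dirichletKer (p : ℕ) (x : ℝ) :
    1 / (2 * π) * ∑ k ∈ Finset.Icc (-(p : ℤ)) p, Complex.exp (Complex.I * k * x) =
      dirichletKer p x := by
  have hreflect : ∑ k ∈ Finset.Icc (-(p : ℤ)) p, Complex.exp (Complex.I * k * x) =
      ∑ k ∈ Finset.Icc (-(p : ℤ)) p, Complex.exp (-(Complex.I * k * x)) :=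
    Finset.sum_equiv (Equiv.neg ℤ) (fun k ↦ by simp [neg_le, and_comm]) (fun k _ ↦ by simp)
  have hcos : ∀ k : ℤ, Complex.cos (k * x) =
      (Complex.exp (Complex.I * k * x) + Complex.exp (-(Complex.I * k * x))) / 2 := fun k ↦ by
    rw [Complex.cos]
    ring_nf
  rw [dirichletKer]
  push_cast
  rw [Finset.sum_congr rfl fun k _ ↦ hcos k, ← Finset.sum_div, Finset.sum_add_distrib, ← hreflect,
    add_self_div_two]

lemma SN_eq_integral_mul_dirichletKer {f : ℝ → ℂ} (hf : IntervalIntegrable f volume (-π) π)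
    (p : ℕ) (x : ℝ) : SN p f x = ∫ y in (-π)..π, f y * dirichletKer p (x - y) := by
  have hterm (k : ℤ) : fourierCoefOn f k * Complex.exp (Complex.I * k * x) =
      ∫ y in (-π)..π, f y * (1 / (2 * π) * Complex.exp (Complex.I * k * (x - y : ℝ))) := by
    rw [fourierCoefOn, mul_right_comm, ← intervalIntegral.integral_const_mul]
    refine intervalIntegral.integral_congr fun y _ ↦ ?_
    have hexp : Complex.exp (Complex.I * k * (x - y : ℝ)) =
        Complex.exp (Complex.I * k * x) * Complex.exp (-(Complex.I * k * y)) := by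
      rw [← Complex.exp_add]
      push_cast
      ring_nf
    simp only [hexp]
    ring
  rw [SN, Finset.sum_congr rfl fun k _ ↦ hterm k, ← intervalIntegral.integral_finsetSum fun k _ ↦
    hf.mul_continuousOn (by fun_prop)]
  simp only [← Finset.mul_sum, sum_exp_eq_dirichletKer]

end DirichletKernel

section CompactlySupported

lemma iteratedDeriv_eq_zero_of_notMem_Ioo {E : Type*} [NormedAddCommGroup E] [NormedSpace ℝ E]
    {f : ℝ → E} {n : ℕ} {a b x : ℝ} (hf : ContDiff ℝ n f)
    (hsupp : Function.support f ⊆ Set.Icc a b) (hx : x ∉ Set.Ioo a b) :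
    iteratedDeriv n f x = 0 := by
  by_contra hne
  have hsub : Function.support (iteratedDeriv n f) ⊆ Set.Icc a b := fun y hy ↦ by
    refine closure_minimal hsupp isClosed_Icc (support_iteratedFDeriv_subset (𝕜 := ℝ) n ?_)
    rwa [Function.mem_support, ← norm_ne_zero_iff, norm_iteratedFDeriv_eq_norm_iteratedDeriv,
      norm_ne_zero_iff]
  have hopen := (hf.continuous_iteratedDeriv n le_rfl).isOpen_support
  exact hx (interior_Icc (a := a) (b := b) ▸ hopen.subset_interior_iff.2 hsub hne)

lemma norm_iteratedDeriv_ofReal {g : ℝ → ℝ} {n : ℕ} (hg : ContDiff ℝ n g) (x : ℝ) :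
    ‖iteratedDeriv n (fun y ↦ (g y : ℂ)) x‖ = |iteratedDeriv n g x| := by
  rw [← Real.norm_eq_abs, ← norm_iteratedFDeriv_eq_norm_iteratedDeriv,
    ← norm_iteratedFDeriv_eq_norm_iteratedDeriv]
  exact Complex.ofRealLI.norm_iteratedFDeriv_comp_left hg.contDiffAt le_rfl

lemma abs_iteratedDeriv_le_CsNorm {g : ℝ → ℝ} {s : ℕ} (hg : ContDiff ℝ s g)
    (hsupp : HasCompactSupport g) (x : ℝ) : |iteratedDeriv s g x| ≤ CsNorm s g := by
  obtain ⟨M, hM⟩ := (hsupp.iteratedFDeriv (𝕜 := ℝ) s).exists_bound_of_continuous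
    (hg.continuous_iteratedFDeriv le_rfl)
  refine le_ciSup (f := fun y ↦ |iteratedDeriv s g y|) ⟨M, ?_⟩ x
  rintro _ ⟨y, rfl⟩
  simpa only [norm_iteratedFDeriv_eq_norm_iteratedDeriv, Real.norm_eq_abs] using hM y

theorem abs_integral_mul_dirichletKer_sub_le {g : ℝ → ℝ} {s p : ℕ} (hg : ContDiff ℝ s g)
    (hsupp : Function.support g ⊆ Set.Icc (-π) π) (hp : p ≠ 0) :
    |(∫ y in (-π)..π, g y * dirichletKer p y) - g 0| ≤
      3 * CsNorm s g * (p : ℝ) ^ ((1 / 2 : ℝ) - s) := by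
  set f : ℝ → ℂ := fun y ↦ g y with hf_def
  have hf : ContDiff ℝ s f := Complex.ofRealCLM.contDiff.comp hg
  have hfsupp : Function.support f ⊆ Set.Icc (-π) π := by simpa [hf_def] using hsupp
  have hper : ∀ j < s, iteratedDeriv j f (-π) = iteratedDeriv j f π := fun j hj ↦ by
    have hfj : ContDiff ℝ j f := hf.of_le (mod_cast hj.le)
    rw [iteratedDeriv_eq_zero_of_notMem_Ioo hfj hfsupp (by simp),
      iteratedDeriv_eq_zero_of_notMem_Ioo hfj hfsupp (by simp)]
  have hM : ∀ y ∈ Set.Icc (-π) π, ‖iteratedDeriv s f y‖ ≤ CsNorm s g := fun y _ ↦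
    (norm_iteratedDeriv_ofReal hg y).trans_le
      (abs_iteratedDeriv_le_CsNorm hg (.of_support_subset_isCompact isCompact_Icc hsupp) y)
  have hSN : SN p f 0 = (∫ y in (-π)..π, g y * dirichletKer p y : ℝ) := by
    rw [SN_eq_integral_mul_dirichletKer (hf.continuous.intervalIntegrable _ _),
      ← intervalIntegral.integral_ofReal]
    simp [hf_def, dirichletKer_neg]
  have hbound := norm_sub_SN_le hp hf hper hM (x := 0) (by simp [pi_pos.le])
  rwa [hSN, hf_def, ← Complex.ofReal_sub, Complex.norm_real, norm_sub_rev] at hbound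

end CompactlySupported

lemma integral_pow_mul_specMollifier (ρ : ℝ → ℝ) {θ : ℝ} (hθ : θ ≠ 0) (p s : ℕ) :
    ∫ y in (-(π * θ))..(π * θ), y ^ s * specMollifier ρ p θ y =
      ∫ y in (-π)..π, (θ * y) ^ s * ρ y * dirichletKer p y := by
  rw [← neg_mul, ← intervalIntegral.mul_integral_comp_mul_right,
    ← intervalIntegral.integral_const_mul]
  refine intervalIntegral.integral_congr fun y _ ↦ ?_
  simp only [specMollifier, mul_div_cancel_right₀ y hθ]
  field_simp

theorem moments_of_spectral_mollifier_general {s p : ℕ} {ρ : ℝ → ℝ} {θ : ℝ}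
    (hρ : ContDiff ℝ s ρ) (hsupp : ∀ x, x ∉ Set.Ioo (-π) π → ρ x = 0) (hθ : θ ≠ 0) (hp : 1 ≤ p) :
    |(∫ y in (-(π * θ))..(π * θ), y ^ s * specMollifier ρ p θ y) -
        (if s = 0 then ρ 0 else 0)| ≤
      3 * CsNorm s (fun y => (θ * y) ^ s * ρ y) * (p : ℝ) ^ ((1 / 2 : ℝ) - s) := by
  have hg0 : (if s = 0 then ρ 0 else 0) = (θ * 0) ^ s * ρ 0 := by simp [zero_pow_eq]
  have hgsupp : Function.support (fun y ↦ (θ * y) ^ s * ρ y) ⊆ Set.Icc (-π) π :=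
    (Function.support_mul_subset_right _ _).trans
      ((Function.support_subset_iff'.2 hsupp).trans Set.Ioo_subset_Icc_self)
  rw [integral_pow_mul_specMollifier ρ hθ, hg0]
  exact abs_integral_mul_dirichletKer_sub_le (by fun_prop) hgsupp (Nat.one_le_iff_ne_zero.1 hp)

/-- For a `C_0^∞(-π,π)` localizer `ρ` with `ρ(0) = 1`, the moments of the
spectral mollifier `ψ_{p,θ}` satisfy
`∫_{-πθ}^{πθ} y^s ψ_{p,θ}(y) dy = δ_{s0} + O(C_s · p^{-(s-1)})`,
with `C_s = Const · ‖(θy)^s ρ(y)‖_{C^s}`. -/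
theorem moments_of_spectral_mollifier :
    ∀ s : ℕ, ∃ Const : ℝ, 0 < Const ∧
      ∀ (ρ : ℝ → ℝ) (θ : ℝ) (p : ℕ),
        ContDiff ℝ (⊤ : ℕ∞) ρ →
        (∀ x, x ∉ Set.Ioo (-π) π → ρ x = 0) →
        ρ 0 = 1 → 0 < θ → 1 ≤ p →
        |(∫ y in (-(π * θ))..(π * θ), y ^ s * specMollifier ρ p θ y) -
            (if s = 0 then 1 else 0)| ≤
          Const * CsNorm s (fun y => (θ * y) ^ s * ρ y) * (p : ℝ) ^ ((1 : ℝ) - s) := by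
  refine fun s ↦ ⟨3, by norm_num, fun ρ θ p hρ hsupp h0 hθ hp ↦ ?_⟩
  have hρs : ContDiff ℝ s ρ := hρ.of_le (mod_cast le_top)
  have hnorm : 0 ≤ CsNorm s (fun y => (θ * y) ^ s * ρ y) := Real.iSup_nonneg fun _ ↦ abs_nonneg _
  refine (h0 ▸ moments_of_spectral_mollifier_general hρs hsupp hθ.ne' hp).trans ?_
  gcongr
  · exact mod_cast hp
  · norm_num
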